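/- If 1 < p < ∞ and w ∈ A_p, then there exists q with 1 < q < p such that w ∈ A_q. -/

import Mathlib

/-!
Put `σ = w ^ (1 - p')`, where `1 - p' = -1 / (p - 1)`. Since `1 - q' = (1 - p') (1 + ε)` when
`q - 1 = (p - 1) / (1 + ε)`, membership `w ∈ A_q` follows from `w ∈ A_p` and a reverse Hölder
inequality `⨍_B σ ^ (1 + ε) ≤ 2 (⨍_B σ) ^ (1 + ε)`, uniform over all balls `B`.

Reverse Hölder is obtained from three facts.

* Chebyshev's inequality for `w` and the `A_p` bound give
  `|{y ∈ B : σ y ≤ β ⨍_B σ}| ≤ C β ^ (p - 1) |B|` (`volume_small_values_le`). With `β` small and the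
  bound applied on `6B`, at least half of `B` satisfies `σ > β ⨍_{6B} σ`. This one estimate yields
  both the doubling property of `σ` and the lower bound on `|B ∩ {σ > γ λ}|` used below
  (`lintegral_enlarged_ball_le`).
* For `λ ≥ ⨍_B σ`, a Calderón–Zygmund type stopping argument. Instead of dyadic cubes it uses, for
  `y ∈ B`, the balls obtained from `B` by the homotheties of centre `y` and ratio `2⁻ᵏ`: they are
  nested, contain `y`, stay inside `B`, and Lebesgue's theorem holds along them. The Vitali covering
  lemma extracts disjoint stopping balls, whence `∫_{B ∩ {σ > λ}} σ ≤ K λ |B ∩ {σ > γ λ}|`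
  (`setLIntegral_superlevel_le`).
* Integrating this inequality against `ε λ ^ (ε - 1) dλ` and absorbing, for `ε` small, the resulting
  multiple of the truncated integral into the left-hand side (`lintegral_rpow_le`).

All of this needs `σ` locally integrable, which follows from `A_p` unless `w` has zero integral over
some ball; in that case `σ = ∞` there and `A_p` forces `w = 0` almost everywhere.
-/

open MeasureTheory Metric Set ENNReal
open scoped NNReal

noncomputable section

/-- Euclidean space `ℝⁿ`. -/
abbrev En (n : ℕ) := EuclideanSpace ℝ (Fin n)

/-- The Muckenhoupt `A_p` condition (w.r.t. Lebesgue measure), `1 < p < ∞`. -/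
def MemAp {n : ℕ} (w : En n → ℝ) (p : ℝ) : Prop :=
  ∃ C : ℝ≥0, ∀ (x : En n) (r : ℝ), 0 < r →
    ((∫⁻ y in ball x r, ENNReal.ofReal (w y)) / volume (ball x r)) *
      ((∫⁻ y in ball x r, ENNReal.ofReal (w y) ^ (1 - p / (p - 1))) / volume (ball x r))
        ^ (p - 1)
      ≤ (C : ℝ≥0∞)

/-! ### Integrating a distributional inequality -/

lemma le_two_mul_of_le_add_half {X J : ℝ≥0∞} (hX : X ≠ ∞) (hJ : J ≠ ∞)
    (h : X ≤ J + ENNReal.ofReal (1 / 2) * X) : X ≤ 2 * J := by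
  lift X to ℝ≥0 using hX
  lift J to ℝ≥0 using hJ
  have e : ENNReal.ofReal (1 / 2) = ((1 / 2 : ℝ≥0) : ℝ≥0∞) := by
    rw [ENNReal.ofReal]; congr; ext; simp
  rw [e] at h
  norm_cast at h ⊢
  rw [← NNReal.coe_le_coe] at h ⊢
  push_cast at h ⊢
  linarith

/-- Truncated form of `lintegral_rpow_le`. The truncation at height `N` makes the integral on the left
finite, so that a half of it can be absorbed. The layer cake formula is used for three functions:
`min g N` with respect to the measure `g ν`, the constant `a` with respect to `g ν` (the levels
`t < a`), and `min g N / γ` with respect to `ν` (the levels `a ≤ t < N`). -/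
lemma lintegral_rpow_min_le {α : Type*} [MeasurableSpace α] (ν : Measure α) [IsFiniteMeasure ν]
    {g : α → ℝ} (hg : Measurable g) (h0 : ∀ x, 0 ≤ g x)
    (hfin : ∫⁻ x, ENNReal.ofReal (g x) ∂ν ≠ ∞)
    {a K γ ε : ℝ} (ha : 0 ≤ a) (hK : 0 ≤ K) (hγ : 0 < γ) (hγ1 : γ ≤ 1) (hε : 0 < ε) (hε1 : ε ≤ 1)
    (hKε : K * ε ≤ γ ^ 2 / 2)
    (h : ∀ t, 0 < t → a ≤ t → ∫⁻ x in {x | t < g x}, ENNReal.ofReal (g x) ∂ν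
      ≤ ENNReal.ofReal (K * t) * ν {x | γ * t < g x}) (N : ℝ) (hN : 0 ≤ N) :
    ∫⁻ x, ENNReal.ofReal (g x * min (g x) N ^ ε) ∂ν
      ≤ 2 * (ENNReal.ofReal (a ^ ε) * ∫⁻ x, ENNReal.ofReal (g x) ∂ν) := by
  set ρ := ν.withDensity (fun x => ENNReal.ofReal (g x)) with hρ
  have hmin0 : ∀ x, 0 ≤ min (g x) N := fun x => le_min (h0 x) hN
  have hminm : Measurable fun x => min (g x) N := hg.min measurable_const
  have hX : ∫⁻ x, ENNReal.ofReal (g x * min (g x) N ^ ε) ∂ν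
      = ∫⁻ x, ENNReal.ofReal (min (g x) N ^ ε) ∂ρ := by
    rw [hρ, lintegral_withDensity_eq_lintegral_mul _ hg.ennreal_ofReal
      (hminm.pow_const ε).ennreal_ofReal]
    refine lintegral_congr fun x => ?_
    simp [ENNReal.ofReal_mul (h0 x)]
  have hρu : ρ univ = ∫⁻ x, ENNReal.ofReal (g x) ∂ν := by
    rw [hρ, withDensity_apply _ MeasurableSet.univ, Measure.restrict_univ]
  set I := ∫⁻ x, ENNReal.ofReal (g x) ∂ν with hI
  set X := ∫⁻ x, ENNReal.ofReal (g x * min (g x) N ^ ε) ∂ν with hXdef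
  have hXfin : X ≠ ∞ := by
    refine ne_top_of_le_ne_top (ENNReal.mul_ne_top (ENNReal.ofReal_ne_top (r := N ^ ε)) hfin) ?_
    rw [hI, ← lintegral_const_mul _ hg.ennreal_ofReal]
    refine lintegral_mono fun x => ?_
    rw [mul_comm, ENNReal.ofReal_mul (by have := hmin0 x; positivity)]
    gcongr
    exacts [hmin0 x, min_le_right _ _]
  have key : ∀ t ∈ Ioi (0 : ℝ), ρ {x | t < min (g x) N} * ENNReal.ofReal (t ^ (ε - 1)) ≤
      ρ {_x | t < a} * ENNReal.ofReal (t ^ (ε - 1)) +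
        ENNReal.ofReal K * (ν {x | t < min (g x) N / γ} *
          ENNReal.ofReal (t ^ ((1 + ε) - 1))) := by
    intro t ht
    have ht : 0 < t := ht
    -- Below level `a` the first summand dominates; between `a` and `N` the second one does;
    -- above `N` the left-hand side vanishes.
    by_cases hta : t < a
    · refine le_trans ?_ le_self_add
      exact mul_le_mul_left (measure_mono fun x _ => hta) _
    by_cases htN : t < N
    · refine le_trans ?_ le_add_self
      have e1 : {x | t < min (g x) N} = {x | t < g x} := by ext x; simp [htN]
      have e2 : {x | γ * t < g x} ⊆ {x | t < min (g x) N / γ} := by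
        intro x hx
        simp only [mem_ofPred_eq] at hx ⊢
        rw [lt_div_iff₀ hγ, mul_comm]
        refine lt_min hx (lt_of_le_of_lt ?_ htN)
        nlinarith
      rw [e1, hρ, withDensity_apply _ (measurableSet_lt measurable_const hg)]
      calc _ ≤ (ENNReal.ofReal (K * t) * ν {x | γ * t < g x}) * ENNReal.ofReal (t ^ (ε - 1)) := by
            gcongr; exact h t ht (not_lt.1 hta)
        _ ≤ (ENNReal.ofReal (K * t) * ν {x | t < min (g x) N / γ}) *
              ENNReal.ofReal (t ^ (ε - 1)) := by gcongr
        _ = _ := by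
            have : t ^ ((1 + ε) - 1) = t * t ^ (ε - 1) := by
              rw [← Real.rpow_one_add' ht.le (by linarith)]; ring_nf
            rw [this, ENNReal.ofReal_mul hK, ENNReal.ofReal_mul ht.le]
            ring
    · have : {x | t < min (g x) N} = ∅ := by
        ext x; simp [htN]
      rw [this, measure_empty, zero_mul]
      exact zero_le
  have hmeas : Measurable fun t : ℝ => ρ {_x | t < a} * ENNReal.ofReal (t ^ (ε - 1)) := by
    refine Measurable.mul (Antitone.measurable fun s t hst => measure_mono ?_) (by fun_prop)
    exact fun x hx => lt_of_le_of_lt hst hx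
  have hlast : ∫⁻ x, ENNReal.ofReal ((min (g x) N / γ) ^ (1 + ε)) ∂ν
      ≤ ENNReal.ofReal ((γ ^ 2)⁻¹) * X := by
    rw [hXdef, ← lintegral_const_mul _ (by fun_prop)]
    refine lintegral_mono fun x => ?_
    rw [← ENNReal.ofReal_mul (by positivity)]
    apply ENNReal.ofReal_le_ofReal
    have hm := hmin0 x
    rw [Real.div_rpow hm hγ.le, Real.rpow_one_add' hm (by linarith), div_eq_inv_mul]
    have : γ ^ 2 ≤ γ ^ (1 + ε) := by
      rw [← Real.rpow_natCast]
      exact Real.rpow_le_rpow_of_exponent_ge hγ hγ1 (by push_cast; linarith)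
    gcongr
    exact min_le_left _ _
  have main : X ≤ ENNReal.ofReal (a ^ ε) * I + ENNReal.ofReal (1 / 2) * X := by
    calc X = ENNReal.ofReal ε * ∫⁻ t in Ioi 0, ρ {x | t < min (g x) N} *
            ENNReal.ofReal (t ^ (ε - 1)) := by
          rw [hX, lintegral_rpow_eq_lintegral_meas_lt_mul ρ (Filter.Eventually.of_forall hmin0)
            hminm.aemeasurable hε]
      _ ≤ ENNReal.ofReal ε * ∫⁻ t in Ioi 0, (ρ {_x | t < a} * ENNReal.ofReal (t ^ (ε - 1)) +
        ENNReal.ofReal K * (ν {x | t < min (g x) N / γ} *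
          ENNReal.ofReal (t ^ ((1 + ε) - 1)))) := by
          gcongr 1
          exact setLIntegral_mono' measurableSet_Ioi key
      _ = ENNReal.ofReal ε * (∫⁻ t in Ioi 0, ρ {_x | t < a} * ENNReal.ofReal (t ^ (ε - 1))) +
          ENNReal.ofReal (K * ε) * ∫⁻ t in Ioi 0, ν {x | t < min (g x) N / γ} *
          ENNReal.ofReal (t ^ ((1 + ε) - 1)) := by
          rw [lintegral_add_left hmeas, lintegral_const_mul' _ _ ENNReal.ofReal_ne_top, mul_add,
            ENNReal.ofReal_mul hK]
          ring
      _ ≤ ENNReal.ofReal (a ^ ε) * I + ENNReal.ofReal (K * ε) * (ENNReal.ofReal ((γ ^ 2)⁻¹) * X) := by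
          gcongr ?_ + _ * ?_
          · rw [← lintegral_rpow_eq_lintegral_meas_lt_mul ρ (f := fun _ => a)
              (Filter.Eventually.of_forall fun _ => ha) aemeasurable_const hε, lintegral_const, hρu]
          · refine le_trans ?_ hlast
            rw [lintegral_rpow_eq_lintegral_meas_lt_mul ν
              (Filter.Eventually.of_forall fun x => div_nonneg (hmin0 x) hγ.le)
              (hminm.div_const γ).aemeasurable (by linarith)]
            exact le_mul_of_one_le_left' (by rw [ENNReal.one_le_ofReal]; linarith)
      _ ≤ _ := by
          rw [← mul_assoc, ← ENNReal.ofReal_mul (by positivity)]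
          gcongr
          rw [← div_eq_mul_inv, div_le_iff₀ (by positivity)]
          linarith
  have hJfin : ENNReal.ofReal (a ^ ε) * I ≠ ∞ := ENNReal.mul_ne_top ENNReal.ofReal_ne_top hfin
  exact le_two_mul_of_le_add_half hXfin hJfin main

/-- Gehring's lemma in distributional form: if `∫_{g > t} g ≤ K t ν {g > γ t}` for all `t ≥ a`, then `g`
is integrable to a power slightly larger than one, with a bound in terms of `a` and `∫ g`. -/
lemma lintegral_rpow_le {α : Type*} [MeasurableSpace α] (ν : Measure α) [IsFiniteMeasure ν]
    {g : α → ℝ} (hg : Measurable g) (h0 : ∀ x, 0 ≤ g x)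
    (hfin : ∫⁻ x, ENNReal.ofReal (g x) ∂ν ≠ ∞)
    {a K γ ε : ℝ} (ha : 0 ≤ a) (hK : 0 ≤ K) (hγ : 0 < γ) (hγ1 : γ ≤ 1) (hε : 0 < ε) (hε1 : ε ≤ 1)
    (hKε : K * ε ≤ γ ^ 2 / 2)
    (h : ∀ t, 0 < t → a ≤ t → ∫⁻ x in {x | t < g x}, ENNReal.ofReal (g x) ∂ν
      ≤ ENNReal.ofReal (K * t) * ν {x | γ * t < g x}) :
    ∫⁻ x, ENNReal.ofReal (g x ^ (1 + ε)) ∂ν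
      ≤ 2 * (ENNReal.ofReal (a ^ ε) * ∫⁻ x, ENNReal.ofReal (g x) ∂ν) := by
  have hlim : Filter.Tendsto
      (fun N : ℕ => ∫⁻ x, ENNReal.ofReal (g x * min (g x) N ^ ε) ∂ν) Filter.atTop
      (nhds (∫⁻ x, ENNReal.ofReal (g x ^ (1 + ε)) ∂ν)) := by
    refine lintegral_tendsto_of_tendsto_of_monotone (fun N => by fun_prop)
      (Filter.Eventually.of_forall fun x => ?_) (Filter.Eventually.of_forall fun x => ?_)
    · intro M N hMN
      have := h0 x
      have h2 : 0 ≤ min (g x) (M : ℝ) := le_min this (Nat.cast_nonneg _)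
      dsimp only
      gcongr
    · apply tendsto_const_nhds.congr'
      filter_upwards [Filter.eventually_ge_atTop ⌈g x⌉₊] with N hN
      rw [min_eq_left (Nat.ceil_le.1 hN), Real.rpow_one_add' (h0 x) (by linarith)]
  exact le_of_tendsto' hlim fun N =>
    lintegral_rpow_min_le ν hg h0 hfin ha hK hγ hγ1 hε hε1 hKε h N (Nat.cast_nonneg _)

/-! ### Averages over balls -/

/-- The average of a nonnegative function over the open ball `B(x, r)`, with values in `[0, ∞]`. -/
def avg {n : ℕ} (g : En n → ℝ) (x : En n) (r : ℝ) : ℝ≥0∞ :=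
  (∫⁻ y in ball x r, ENNReal.ofReal (g y)) / volume (ball x r)

lemma volume_ball_mul {n : ℕ} (x : En n) {s : ℝ} (hs : 0 < s) (r : ℝ) :
    volume (ball x (s * r)) = ENNReal.ofReal (s ^ n) * volume (ball x r) := by
  rw [Measure.addHaar_ball_mul_of_pos _ _ hs, finrank_euclideanSpace_fin,
    Measure.addHaar_ball_center _ x r]

lemma volume_ball_ne_zero {n : ℕ} (x : En n) {r : ℝ} (hr : 0 < r) : volume (ball x r) ≠ 0 :=
  (measure_ball_pos volume x hr).ne'

lemma volume_ball_ne_top {n : ℕ} (x : En n) (r : ℝ) : volume (ball x r) ≠ ∞ :=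
  measure_ball_lt_top.ne

lemma avg_mul_volume {n : ℕ} (g : En n → ℝ) (x : En n) {r : ℝ} (hr : 0 < r) :
    avg g x r * volume (ball x r) = ∫⁻ y in ball x r, ENNReal.ofReal (g y) :=
  ENNReal.div_mul_cancel (volume_ball_ne_zero x hr) (volume_ball_ne_top x r)

lemma avg_ne_top {n : ℕ} {g : En n → ℝ}
    (hfin : ∀ x r, ∫⁻ y in ball x r, ENNReal.ofReal (g y) ≠ ∞) (x : En n) {r : ℝ} (hr : 0 < r) :
    avg g x r ≠ ∞ :=
  ENNReal.div_ne_top (hfin x r) (volume_ball_ne_zero x hr)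

/-- Estimate on one stopping ball `B`, whose average is between `l` and `2 ^ n l`. The hypothesis `H`
bounds the average of `g` over `6B` by a multiple of its average over `B`, hence by a multiple of
`l`, and gives a subset of `B` of half its measure on which `g` exceeds a multiple of `l`. -/
lemma lintegral_enlarged_ball_le {n : ℕ} {g : En n → ℝ} (hg : Measurable g)
    (hfin : ∀ x r, ∫⁻ y in ball x r, ENNReal.ofReal (g y) ≠ ∞)
    {β : ℝ} (hβ : 0 < β)
    (H : ∀ x r, 0 < r → volume (ball x r) ≤
      2 * volume (ball x r ∩ {y | ENNReal.ofReal β * avg g x (6 * r) < ENNReal.ofReal (g y)}))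
    (c : En n) {ρ l : ℝ} (hρ : 0 < ρ) (hl : 0 < l)
    (h1 : ENNReal.ofReal l ≤ avg g c ρ) (h2 : avg g c ρ ≤ ENNReal.ofReal (2 ^ n * l)) :
    ∫⁻ y in ball c (6 * ρ), ENNReal.ofReal (g y) ≤
      ENNReal.ofReal (6 ^ n * 2 ^ (n + 2) / β * l) *
        volume (ball c ρ ∩ {y | β / 6 ^ n * l < g y}) := by
  -- All quantities are finite, so the argument is carried out with real numbers: `A`, `a` are the
  -- averages over `B` and `6B`, `m = |B|`, and below `s = |B ∩ {g > β a}|`.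
  have hρ6 : 0 < 6 * ρ := by positivity
  obtain ⟨A, hA⟩ : ∃ A, A = (avg g c ρ).toReal := ⟨_, rfl⟩
  obtain ⟨a, ha⟩ : ∃ a, a = (avg g c (6 * ρ)).toReal := ⟨_, rfl⟩
  obtain ⟨m, hm⟩ : ∃ m, m = (volume (ball c ρ)).toReal := ⟨_, rfl⟩
  have hA0 : 0 ≤ A := hA ▸ ENNReal.toReal_nonneg
  have ha0 : 0 ≤ a := ha ▸ ENNReal.toReal_nonneg
  have hA' : avg g c ρ = ENNReal.ofReal A := by
    rw [hA, ENNReal.ofReal_toReal (avg_ne_top hfin c hρ)]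
  have ha' : avg g c (6 * ρ) = ENNReal.ofReal a := by
    rw [ha, ENNReal.ofReal_toReal (avg_ne_top hfin c hρ6)]
  have hm' : volume (ball c ρ) = ENNReal.ofReal m := by
    rw [hm, ENNReal.ofReal_toReal (volume_ball_ne_top c ρ)]
  have hm0 : 0 < m := by
    rw [hm]; exact ENNReal.toReal_pos (volume_ball_ne_zero c hρ) (volume_ball_ne_top c ρ)
  have hI1 := avg_mul_volume g c hρ
  have hI6 := avg_mul_volume g c hρ6
  rw [volume_ball_mul c (by norm_num), ha', hm', ← ENNReal.ofReal_mul (by positivity),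
    ← ENNReal.ofReal_mul ha0] at hI6
  rw [hA', hm', ← ENNReal.ofReal_mul hA0] at hI1
  rw [hA', ENNReal.ofReal_le_ofReal_iff hA0] at h1
  rw [hA', ENNReal.ofReal_le_ofReal_iff (by positivity)] at h2
  have hle : A * m ≤ a * (6 ^ n * m) := by
    rw [← ENNReal.ofReal_le_ofReal_iff (by positivity), hI1, hI6]
    exact lintegral_mono_set (ball_subset_ball (by linarith))
  have hS : {y | ENNReal.ofReal β * avg g c (6 * ρ) < ENNReal.ofReal (g y)} =
      {y | β * a < g y} := by
    ext y
    simp only [mem_ofPred_eq]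
    rw [ha', ← ENNReal.ofReal_mul hβ.le, ENNReal.ofReal_lt_ofReal_iff_of_nonneg (by positivity)]
  have Hc := H c ρ hρ
  rw [hS, hm'] at Hc
  set S := ball c ρ ∩ {y | β * a < g y} with hSdef
  obtain ⟨s, hs⟩ : ∃ s, s = (volume S).toReal := ⟨_, rfl⟩
  have hs0 : 0 ≤ s := hs ▸ ENNReal.toReal_nonneg
  have hs' : volume S = ENNReal.ofReal s := by
    rw [hs, ENNReal.ofReal_toReal (ne_top_of_le_ne_top (volume_ball_ne_top c ρ)
      (measure_mono inter_subset_left))]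
  have hms : m ≤ 2 * s := by
    rw [← ENNReal.ofReal_le_ofReal_iff (by positivity), ENNReal.ofReal_mul (by norm_num), ← hs']
    simpa using Hc
  have hcheb : β * a * s ≤ A * m := by
    rw [← ENNReal.ofReal_le_ofReal_iff (by positivity), hI1, ENNReal.ofReal_mul (by positivity),
      ← hs', ← setLIntegral_const]
    refine (setLIntegral_mono hg.ennreal_ofReal fun y hy => ?_).trans
      (lintegral_mono_set (inter_subset_left (t := {y | β * a < g y})))
    exact ENNReal.ofReal_le_ofReal hy.2.le
  have hspos : 0 < s := by linarith
  have hba : β * a ≤ 2 ^ (n + 1) * l := by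
    have : β * a * s ≤ 2 ^ (n + 1) * l * s := by
      calc β * a * s ≤ A * m := hcheb
        _ ≤ (2 ^ n * l) * (2 * s) := by gcongr
        _ = _ := by ring
    exact le_of_mul_le_mul_right this hspos
  have hal : l / 6 ^ n ≤ a := by
    rw [div_le_iff₀ (by positivity)]
    have : A * m ≤ (a * 6 ^ n) * m := by linarith
    linarith [le_of_mul_le_mul_right this hm0]
  calc ∫⁻ y in ball c (6 * ρ), ENNReal.ofReal (g y) = ENNReal.ofReal (a * (6 ^ n * m)) := hI6.symm
    _ ≤ ENNReal.ofReal (6 ^ n * 2 ^ (n + 2) / β * l * s) := by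
        apply ENNReal.ofReal_le_ofReal
        have : a ≤ 2 ^ (n + 1) * l / β := by rw [le_div_iff₀ hβ]; linarith
        calc a * (6 ^ n * m) ≤ (2 ^ (n + 1) * l / β) * (6 ^ n * (2 * s)) := by gcongr
          _ = _ := by ring
    _ = ENNReal.ofReal (6 ^ n * 2 ^ (n + 2) / β * l) * volume S := by
        rw [ENNReal.ofReal_mul (by positivity), hs']
    _ ≤ _ := by
        gcongr
        refine inter_subset_inter_right _ fun y (hy : β * a < g y) => ?_
        refine lt_of_le_of_lt ?_ hy
        calc β / 6 ^ n * l = β * (l / 6 ^ n) := by ring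
          _ ≤ _ := by gcongr

/-! ### Stopping balls and the Vitali covering -/

lemma avg_eq_ofReal_setAverage {n : ℕ} {g : En n → ℝ} (hg : Measurable g) (h0 : ∀ x, 0 ≤ g x)
    (hfin : ∀ x r, ∫⁻ y in ball x r, ENNReal.ofReal (g y) ≠ ∞) (c : En n) {ρ : ℝ} (hρ : 0 < ρ) :
    avg g c ρ = ENNReal.ofReal (⨍ y in closedBall c ρ, g y) := by
  have hae : (ball c ρ : Set (En n)) =ᵐ[volume] closedBall c ρ := by
    refine (ball_subset_closedBall.eventuallyLE).antisymm ?_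
    rw [ae_le_set, closedBall_sdiff_ball]
    exact Measure.addHaar_sphere_of_ne_zero _ _ hρ.ne'
  have hint : IntegrableOn g (closedBall c ρ) := by
    refine ⟨hg.aestronglyMeasurable, ?_⟩
    rw [hasFiniteIntegral_iff_ofReal (Filter.Eventually.of_forall h0)]
    rw [← setLIntegral_congr hae]
    exact (hfin c ρ).lt_top
  rw [ofReal_setAverage hint (Filter.Eventually.of_forall h0), avg, setLIntegral_congr hae,
    measure_congr hae]

lemma avg_le_of_subset {n : ℕ} (g : En n → ℝ) {c c' : En n} {ρ l : ℝ} (hρ : 0 < ρ)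
    (hsub : ball c ρ ⊆ ball c' (2 * ρ)) (h : avg g c' (2 * ρ) ≤ ENNReal.ofReal l) :
    avg g c ρ ≤ ENNReal.ofReal (2 ^ n * l) := by
  refine ENNReal.div_le_of_le_mul ?_
  calc ∫⁻ y in ball c ρ, ENNReal.ofReal (g y) ≤ ∫⁻ y in ball c' (2 * ρ), ENNReal.ofReal (g y) :=
        lintegral_mono_set hsub
    _ = avg g c' (2 * ρ) * volume (ball c' (2 * ρ)) := (avg_mul_volume g c' (by positivity)).symm
    _ ≤ ENNReal.ofReal l * (ENNReal.ofReal (2 ^ n) * volume (ball c' ρ)) := by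
        rw [volume_ball_mul c' (by norm_num)]
        gcongr
    _ = _ := by
        rw [Measure.addHaar_ball_center _ c', Measure.addHaar_ball_center _ c,
          ENNReal.ofReal_mul (by positivity)]
        ring

/-- At almost every point `y` of a ball `B` where `g y > l ≥ ⨍_B g`, there is a ball inside `B`
containing `y` on which the average of `g` is comparable to `l`: the largest of the homothetic copies
of `B` with centre of homothety `y` and ratio `2⁻ᵏ` whose average exceeds `l`. -/
lemma ae_exists_stopping_ball {n : ℕ} {g : En n → ℝ} (hg : Measurable g) (h0 : ∀ x, 0 ≤ g x)
    (hfin : ∀ x r, ∫⁻ y in ball x r, ENNReal.ofReal (g y) ≠ ∞) :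
    ∀ᵐ y, ∀ (x : En n) (r l : ℝ), y ∈ ball x r → 0 < l → l < g y →
      avg g x r ≤ ENNReal.ofReal l →
      ∃ c ρ, 0 < ρ ∧ ρ ≤ r ∧ y ∈ ball c ρ ∧ ball c ρ ⊆ ball x r ∧
        ENNReal.ofReal l ≤ avg g c ρ ∧ avg g c ρ ≤ ENNReal.ofReal (2 ^ n * l) := by
  have hloc : LocallyIntegrable g (volume : Measure (En n)) := by
    intro x
    refine ⟨ball x 1, ball_mem_nhds x one_pos, hg.aestronglyMeasurable, ?_⟩
    rw [hasFiniteIntegral_iff_ofReal (Filter.Eventually.of_forall h0)]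
    exact (hfin x 1).lt_top
  filter_upwards [IsUnifLocDoublingMeasure.ae_tendsto_average volume hloc 1] with y hy x r l hyx hl
    hly havg
  have hr : 0 < r := pos_of_mem_ball hyx
  have hd : dist y x < r := hyx
  -- `ball (c t) (t * r)` is the image of `ball x r` under the homothety of centre `y` and ratio `t`.
  let c : ℝ → En n := fun t => y + t • (x - y)
  have hyc : ∀ t, 0 < t → y ∈ ball (c t) (t * r) := by
    intro t ht
    rw [mem_ball, dist_eq_norm]
    simp only [c, sub_add_cancel_left, norm_neg, norm_smul, Real.norm_eq_abs, abs_of_pos ht]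
    rw [← dist_eq_norm, dist_comm]
    gcongr
  have hsub : ∀ s t, s ≤ t → ball (c s) (s * r) ⊆ ball (c t) (t * r) := by
    intro s t hst
    apply ball_subset_ball'
    have : dist (c s) (c t) = (t - s) * dist y x := by
      rw [dist_comm, dist_eq_norm, dist_comm y x, dist_eq_norm]
      simp only [c, add_sub_add_left_eq_sub, ← sub_smul, norm_smul, Real.norm_eq_abs]
      rw [abs_of_nonneg (sub_nonneg.2 hst)]
    rw [this]
    nlinarith
  have hc1 : c 1 = x := by simp [c]
  let t : ℕ → ℝ := fun k => (1 / 2) ^ k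
  have ht : ∀ k, 0 < t k := fun k => by positivity
  have hlim := hy (l := Filter.atTop) (fun k => c (t k)) (fun k => t k * r)
    (by
      rw [tendsto_nhdsWithin_iff]
      refine ⟨?_, Filter.Eventually.of_forall fun k => mul_pos (ht k) hr⟩
      have := (tendsto_pow_atTop_nhds_zero_of_lt_one (r := (1 / 2 : ℝ)) (by norm_num)
        (by norm_num)).mul_const r
      simpa [t] using this)
    (Filter.Eventually.of_forall fun k => by
      rw [one_mul]; exact ball_subset_closedBall (hyc _ (ht k)))
  obtain ⟨k₀, hk₀⟩ := (hlim.eventually (lt_mem_nhds hly)).exists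
  have hex : ∃ k, ENNReal.ofReal l < avg g (c (t k)) (t k * r) := by
    refine ⟨k₀, ?_⟩
    rw [avg_eq_ofReal_setAverage hg h0 hfin _ (mul_pos (ht _) hr)]
    exact (ENNReal.ofReal_lt_ofReal_iff (hl.trans hk₀)).2 hk₀
  classical
  obtain ⟨k, hk, hmin⟩ : ∃ k, ENNReal.ofReal l < avg g (c (t k)) (t k * r) ∧
      ∀ j < k, avg g (c (t j)) (t j * r) ≤ ENNReal.ofReal l :=
    ⟨Nat.find hex, Nat.find_spec hex, fun j hj => not_lt.1 (Nat.find_min hex hj)⟩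
  have htle : ∀ k, t k ≤ 1 := fun k => pow_le_one₀ (by norm_num) (by norm_num)
  have hx : ball (c (t k)) (t k * r) ⊆ ball x r := by
    simpa [hc1] using hsub (t k) 1 (htle k)
  refine ⟨c (t k), t k * r, mul_pos (ht k) hr, ?_, hyc _ (ht k), hx, hk.le, ?_⟩
  · nlinarith [htle k]
  · cases k with
    | zero => simp only [t, pow_zero, hc1, one_mul] at hk; exact absurd hk (not_lt.2 havg)
    | succ j =>
      have e : t j = 2 * t (j + 1) := by simp only [t, pow_succ]; ring
      have e2 : t j * r = 2 * (t (j + 1) * r) := by rw [e]; ring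
      have hs := hsub (t (j + 1)) (t j) (by linarith [ht (j + 1)])
      have hm := hmin j (Nat.lt_succ_self j)
      rw [e2] at hs hm
      exact avg_le_of_subset g (mul_pos (ht _) hr) hs hm

/-- The good-`λ` type inequality: sum `lintegral_enlarged_ball_le` over a Vitali subfamily of the
stopping balls. -/
lemma setLIntegral_superlevel_le {n : ℕ} {g : En n → ℝ} (hg : Measurable g) (h0 : ∀ x, 0 ≤ g x)
    (hfin : ∀ x r, ∫⁻ y in ball x r, ENNReal.ofReal (g y) ≠ ∞)
    {β : ℝ} (hβ : 0 < β)
    (H : ∀ x r, 0 < r → volume (ball x r) ≤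
      2 * volume (ball x r ∩ {y | ENNReal.ofReal β * avg g x (6 * r) < ENNReal.ofReal (g y)}))
    (x : En n) {r l : ℝ} (hl : 0 < l) (havg : avg g x r ≤ ENNReal.ofReal l) :
    ∫⁻ y in ball x r ∩ {y | l < g y}, ENNReal.ofReal (g y) ≤
      ENNReal.ofReal (6 ^ n * 2 ^ (n + 2) / β * l) *
        volume (ball x r ∩ {y | β / 6 ^ n * l < g y}) := by
  let T : Set (En n × ℝ) := {q | 0 < q.2 ∧ q.2 ≤ r ∧ ball q.1 q.2 ⊆ ball x r ∧
    ENNReal.ofReal l ≤ avg g q.1 q.2 ∧ avg g q.1 q.2 ≤ ENNReal.ofReal (2 ^ n * l)}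
  obtain ⟨u, huT, hdisj, hcov⟩ := Vitali.exists_disjoint_subfamily_covering_enlargement_closedBall
    T Prod.fst Prod.snd r (fun q hq => hq.2.1) 5 (by norm_num)
  have hdisj' : u.PairwiseDisjoint fun q => ball q.1 q.2 :=
    hdisj.mono fun q => ball_subset_closedBall
  have hcount : u.Countable := hdisj'.countable_of_isOpen (fun q _ => isOpen_ball)
    fun q hq => nonempty_ball.2 (huT hq).1
  have hsub : (ball x r ∩ {y | l < g y} : Set (En n)) ≤ᵐ[volume]
      (⋃ q ∈ u, ball q.1 (6 * q.2) : Set (En n)) := by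
    filter_upwards [ae_exists_stopping_ball hg h0 hfin] with y hy hmem
    obtain ⟨c, ρ, hρ, hρr, hyc, hcx, h1, h2⟩ := hy x r l hmem.1 hl hmem.2 havg
    obtain ⟨q, hq, hsubq⟩ := hcov (c, ρ) ⟨hρ, hρr, hcx, h1, h2⟩
    refine mem_iUnion₂.2 ⟨q, hq, ?_⟩
    have := (huT hq).1
    exact closedBall_subset_ball (by linarith) (hsubq (ball_subset_closedBall hyc))
  have hmeas : MeasurableSet {y | β / 6 ^ n * l < g y} := measurableSet_lt measurable_const hg
  have : Countable u := hcount.to_subtype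
  calc ∫⁻ y in ball x r ∩ {y | l < g y}, ENNReal.ofReal (g y)
      ≤ ∫⁻ y in ⋃ q ∈ u, ball q.1 (6 * q.2), ENNReal.ofReal (g y) := lintegral_mono_set' hsub
    _ ≤ ∑' q : u, ∫⁻ y in ball q.1.1 (6 * q.1.2), ENNReal.ofReal (g y) := by
        rw [biUnion_eq_iUnion]; exact lintegral_iUnion_le _ _
    _ ≤ ∑' q : u, ENNReal.ofReal (6 ^ n * 2 ^ (n + 2) / β * l) *
        volume (ball q.1.1 q.1.2 ∩ {y | β / 6 ^ n * l < g y}) := by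
        refine ENNReal.tsum_le_tsum fun q => ?_
        obtain ⟨hq0, -, -, h1, h2⟩ := huT q.2
        exact lintegral_enlarged_ball_le hg hfin hβ H q.1.1 hq0 hl h1 h2
    _ = ENNReal.ofReal (6 ^ n * 2 ^ (n + 2) / β * l) *
        volume (⋃ q : u, ball q.1.1 q.1.2 ∩ {y | β / 6 ^ n * l < g y}) := by
        rw [ENNReal.tsum_mul_left, measure_iUnion]
        · intro q q' hne
          exact (hdisj' q.2 q'.2 (Subtype.coe_injective.ne hne)).mono inter_subset_left
            inter_subset_left
        · exact fun q => measurableSet_ball.inter hmeas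
    _ ≤ _ := by
        gcongr
        exact iUnion_subset fun q => inter_subset_inter_left _ (huT q.2).2.2.1

/-! ### Reverse Hölder inequality -/

/-- Reverse Hölder inequality: `H` says that on at least half of every ball `B` the function `g` is larger
than a fixed fraction of its average over `6B`. -/
lemma reverse_holder {n : ℕ} {g : En n → ℝ} (hg : Measurable g) (h0 : ∀ x, 0 ≤ g x)
    (hfin : ∀ x r, ∫⁻ y in ball x r, ENNReal.ofReal (g y) ≠ ∞)
    {β : ℝ} (hβ : 0 < β)
    (H : ∀ x r, 0 < r → volume (ball x r) ≤
      2 * volume (ball x r ∩ {y | ENNReal.ofReal β * avg g x (6 * r) < ENNReal.ofReal (g y)})) :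
    ∃ ε : ℝ, 0 < ε ∧ ∀ (x : En n) (r : ℝ), 0 < r →
      (∫⁻ y in ball x r, ENNReal.ofReal (g y ^ (1 + ε))) / volume (ball x r)
        ≤ 2 * avg g x r ^ (1 + ε) := by
  obtain ⟨K, hKdef⟩ : ∃ K : ℝ, K = 6 ^ n * 2 ^ (n + 2) / β := ⟨_, rfl⟩
  have hK : 0 < K := by rw [hKdef]; positivity
  obtain ⟨γ, hγdef⟩ : ∃ γ : ℝ, γ = min 1 (β / 6 ^ n) := ⟨_, rfl⟩
  have hγ : 0 < γ := by rw [hγdef]; positivity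
  obtain ⟨ε, hεdef⟩ : ∃ ε : ℝ, ε = min 1 (γ ^ 2 / 2 / K) := ⟨_, rfl⟩
  have hε : 0 < ε := by rw [hεdef]; positivity
  refine ⟨ε, hε, fun x r hr => ?_⟩
  have hat := avg_ne_top hfin x hr
  have : IsFiniteMeasure (volume.restrict (ball x r)) :=
    ⟨by rw [Measure.restrict_apply_univ]; exact measure_ball_lt_top⟩
  have key := lintegral_rpow_le (volume.restrict (ball x r)) hg h0 (hfin x r)
    (a := (avg g x r).toReal) (K := K) (γ := γ) (ε := ε) ENNReal.toReal_nonneg hK.le hγ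
    (hγdef ▸ min_le_left _ _) hε (hεdef ▸ min_le_left _ _)
    (by
      rw [mul_comm, ← le_div_iff₀ hK]
      exact hεdef ▸ min_le_right _ _)
    (fun t ht hat' => by
      rw [Measure.restrict_restrict (measurableSet_lt measurable_const hg),
        Measure.restrict_apply (measurableSet_lt measurable_const hg), inter_comm]
      refine (setLIntegral_superlevel_le hg h0 hfin hβ H x ht
        ((ENNReal.le_ofReal_iff_toReal_le hat ht.le).2 hat')).trans ?_
      rw [← hKdef, inter_comm]
      gcongr ENNReal.ofReal _ * volume ?_
      refine inter_subset_inter_left _ fun y (hy : β / 6 ^ n * t < g y) => ?_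
      refine lt_of_le_of_lt ?_ hy
      gcongr
      exact hγdef ▸ min_le_right _ _)
  refine ENNReal.div_le_of_le_mul (key.trans_eq ?_)
  rw [← ENNReal.ofReal_rpow_of_nonneg ENNReal.toReal_nonneg hε.le, ENNReal.ofReal_toReal hat,
    ← avg_mul_volume g x hr, ENNReal.rpow_add_of_nonneg _ _ zero_le_one hε.le, ENNReal.rpow_one]
  ring

/-! ### Muckenhoupt weights -/

lemma dual_exponent {p : ℝ} (hp : 1 < p) : 1 - p / (p - 1) = -(p - 1)⁻¹ := by
  have : p - 1 ≠ 0 := by linarith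
  field_simp
  ring

/-- An `A_p` weight with zero integral over one ball vanishes almost everywhere: the dual weight has
infinite integral over every larger ball. -/
lemma lintegral_eq_zero_of_ball {n : ℕ} {p : ℝ} (hp : 1 < p) {w : En n → ℝ} (hw : MemAp w p)
    (hm : AEMeasurable w)
    {x₀ : En n} {r₀ : ℝ} (hr₀ : 0 < r₀) (hz : ∫⁻ y in ball x₀ r₀, ENNReal.ofReal (w y) = 0)
    (x : En n) (r : ℝ) : ∫⁻ y in ball x r, ENNReal.ofReal (w y) = 0 := by
  obtain ⟨C, hC⟩ := hw
  by_cases hr : r ≤ 0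
  · simp [ball_eq_empty.2 hr]
  obtain ⟨R, hR⟩ : ∃ R, R = r₀ + r + dist x x₀ := ⟨_, rfl⟩
  have hd : 0 ≤ dist x x₀ := dist_nonneg
  have hR0 : 0 < R := by linarith
  have h1 : ball x₀ r₀ ⊆ ball x₀ R := ball_subset_ball (by linarith)
  have h2 : ball x r ⊆ ball x₀ R := ball_subset_ball' (by linarith)
  have htop : ∫⁻ y in ball x₀ R, ENNReal.ofReal (w y) ^ (1 - p / (p - 1)) = ∞ := by
    rw [eq_top_iff]
    refine le_trans ?_ (lintegral_mono_set h1)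
    rw [lintegral_eq_zero_iff' hm.ennreal_ofReal.restrict] at hz
    have : ∫⁻ y in ball x₀ r₀, ENNReal.ofReal (w y) ^ (1 - p / (p - 1))
        = ∫⁻ _y in ball x₀ r₀, ∞ := by
      refine lintegral_congr_ae ?_
      filter_upwards [hz] with y hy
      rw [hy, dual_exponent hp]
      exact ENNReal.zero_rpow_of_neg (by have : 0 < p - 1 := by linarith
                                         simpa using this)
    rw [this, setLIntegral_const, ENNReal.top_mul (volume_ball_ne_zero x₀ hr₀)]
  have := hC x₀ R hR0
  rw [htop, ENNReal.top_div_of_ne_top (volume_ball_ne_top _ _),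
    ENNReal.top_rpow_of_pos (by linarith)] at this
  have h3 : (∫⁻ y in ball x₀ R, ENNReal.ofReal (w y)) / volume (ball x₀ R) = 0 := by
    by_contra hne
    rw [ENNReal.mul_top hne] at this
    exact ENNReal.coe_ne_top (top_le_iff.1 this)
  have h4 := (ENNReal.div_eq_zero_iff.1 h3).resolve_right (volume_ball_ne_top _ _)
  exact le_antisymm ((lintegral_mono_set h2).trans h4.le) zero_le

/-- Chebyshev form of the `A_p` condition: writing `σ = w ^ (1 - p')` and `a` for its average, on
`{σ ≤ β a}` one has `1 ≤ (β a) ^ (p - 1) w`; integrate over the ball. -/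
lemma volume_small_values_le {n : ℕ} {p : ℝ} (hp : 1 < p) {w : En n → ℝ} (hm : AEMeasurable w)
    {C : ℝ≥0} {x : En n} {r : ℝ} (hr : 0 < r) {a : ℝ≥0∞} (ha : a ≠ ∞)
    (hC : ((∫⁻ y in ball x r, ENNReal.ofReal (w y)) / volume (ball x r)) * a ^ (p - 1) ≤ C)
    {β : ℝ} (hβ : 0 < β) :
    volume (ball x r ∩ {y | ENNReal.ofReal (w y) ^ (1 - p / (p - 1)) ≤ ENNReal.ofReal β * a}) ≤
      ENNReal.ofReal (C * β ^ (p - 1)) * volume (ball x r) := by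
  have hp1 : 0 < p - 1 := by linarith
  have hba : ENNReal.ofReal β * a ≠ ∞ := ENNReal.mul_ne_top ENNReal.ofReal_ne_top ha
  rw [dual_exponent hp]
  have h1 : volume (ball x r ∩ {y | ENNReal.ofReal (w y) ^ (-(p - 1)⁻¹) ≤ ENNReal.ofReal β * a}) ≤
      ∫⁻ y in ball x r, (ENNReal.ofReal β * a) ^ (p - 1) * ENNReal.ofReal (w y) := by
    rw [inter_comm, ← Measure.restrict_apply' measurableSet_ball]
    refine meas_le_lintegral₀ (hm.ennreal_ofReal.restrict.const_mul _) fun y hy => ?_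
    have hy : ENNReal.ofReal (w y) ^ (-(p - 1)⁻¹) ≤ ENNReal.ofReal β * a := hy
    have hw0 : ENNReal.ofReal (w y) ≠ 0 := by
      intro h
      rw [h, ENNReal.zero_rpow_of_neg (by simpa using hp1)] at hy
      exact hba (top_le_iff.1 hy)
    calc (1 : ℝ≥0∞) = (ENNReal.ofReal (w y))⁻¹ * ENNReal.ofReal (w y) :=
          (ENNReal.inv_mul_cancel hw0 ENNReal.ofReal_ne_top).symm
      _ = (ENNReal.ofReal (w y) ^ (-(p - 1)⁻¹)) ^ (p - 1) * ENNReal.ofReal (w y) := by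
          rw [← ENNReal.rpow_mul, neg_mul, inv_mul_cancel₀ hp1.ne', ENNReal.rpow_neg_one]
      _ ≤ _ := by gcongr
  refine h1.trans ?_
  have hv := ENNReal.div_mul_cancel (b := ∫⁻ y in ball x r, ENNReal.ofReal (w y))
    (volume_ball_ne_zero x hr) (volume_ball_ne_top x r)
  rw [lintegral_const_mul'' _ hm.ennreal_ofReal.restrict, ← hv,
    ENNReal.mul_rpow_of_nonneg _ _ hp1.le]
  calc _ = ENNReal.ofReal β ^ (p - 1) * ((∫⁻ y in ball x r, ENNReal.ofReal (w y)) /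
        volume (ball x r) * a ^ (p - 1)) * volume (ball x r) := by ring
    _ ≤ ENNReal.ofReal β ^ (p - 1) * C * volume (ball x r) := by gcongr
    _ = _ := by
        rw [ENNReal.ofReal_mul C.coe_nonneg, ENNReal.ofReal_coe_nnreal,
          ENNReal.ofReal_rpow_of_nonneg hβ.le hp1.le]
        ring

/-- openness of the Muckenhoupt classes — if `w ∈ A_p`, `1 < p < ∞`, then
`w ∈ A_q` for some `1 < q < p`. -/
theorem statement10
    (n : ℕ) (p : ℝ) (hp : 1 < p)
    (w : En n → ℝ) (hw0 : ∀ x, 0 ≤ w x) (hwloc : LocallyIntegrable w volume)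
    (hw : MemAp w p) :
    ∃ q : ℝ, 1 < q ∧ q < p ∧ MemAp w q := by
  have hm : AEMeasurable w := hwloc.aestronglyMeasurable.aemeasurable
  have hp1 : 0 < p - 1 := by linarith
  by_cases hz : ∃ x₀ : En n, ∃ r₀, 0 < r₀ ∧ ∫⁻ y in ball x₀ r₀, ENNReal.ofReal (w y) = 0
  · obtain ⟨x₀, r₀, hr₀, hz⟩ := hz
    refine ⟨(1 + p) / 2, by linarith, by linarith, 0, fun x r hr => ?_⟩
    rw [lintegral_eq_zero_of_ball hp hw hm hr₀ hz x r]
    simp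
  push Not at hz
  obtain ⟨C, hC⟩ := hw
  set σ : En n → ℝ≥0∞ := fun y => ENNReal.ofReal (w y) ^ (1 - p / (p - 1)) with hσdef
  have hσm : AEMeasurable σ := hm.ennreal_ofReal.pow_const _
  have hσfin : ∀ x r, ∫⁻ y in ball x r, σ y ≠ ∞ := by
    intro x r
    by_cases hr : r ≤ 0
    · simp [ball_eq_empty.2 hr]
    have hr : 0 < r := not_le.1 hr
    intro htop
    have := hC x r hr
    rw [htop, ENNReal.top_div_of_ne_top (volume_ball_ne_top _ _),
      ENNReal.top_rpow_of_pos hp1, ENNReal.mul_top] at this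
    · exact ENNReal.coe_ne_top (top_le_iff.1 this)
    · exact (ENNReal.div_pos (hz x r hr) (volume_ball_ne_top _ _)).ne'
  have hσtop : ∀ᵐ y, σ y < ∞ := by
    have : ∀ k : ℕ, ∀ᵐ y, y ∈ ball (0 : En n) k → σ y < ∞ := fun k =>
      (ae_restrict_iff' measurableSet_ball).1 (ae_lt_top' hσm.restrict (hσfin 0 k))
    filter_upwards [ae_all_iff.2 this] with y hy
    obtain ⟨k, hk⟩ := exists_nat_gt (dist y 0)
    exact hy k hk
  -- A finite, everywhere measurable version of `σ`.
  obtain ⟨g, hgdef⟩ : ∃ g : En n → ℝ, g = fun y => (hσm.mk σ y).toReal := ⟨_, rfl⟩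
  have hg : Measurable g := by rw [hgdef]; exact hσm.measurable_mk.ennreal_toReal
  have hg0 : ∀ y, 0 ≤ g y := fun y => by rw [hgdef]; exact ENNReal.toReal_nonneg
  have hgσ : ∀ᵐ y, ENNReal.ofReal (g y) = σ y := by
    filter_upwards [hσm.ae_eq_mk, hσtop] with y h1 h2
    rw [hgdef]
    simp only
    rw [← h1, ENNReal.ofReal_toReal h2.ne]
  have hint : ∀ x r, ∫⁻ y in ball x r, ENNReal.ofReal (g y) = ∫⁻ y in ball x r, σ y :=
    fun x r => lintegral_congr_ae (ae_restrict_of_ae hgσ)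
  have hgfin : ∀ x r, ∫⁻ y in ball x r, ENNReal.ofReal (g y) ≠ ∞ := fun x r => by
    rw [hint]; exact hσfin x r
  have hC' : ∀ x r, 0 < r → ((∫⁻ y in ball x r, ENNReal.ofReal (w y)) / volume (ball x r)) *
      avg g x r ^ (p - 1) ≤ C := fun x r hr => by
    rw [avg, hint]; exact hC x r hr
  -- Small values should occupy at most `6⁻ⁿ / 2` of `6B`, that is, at most half of `B`.
  obtain ⟨β, hβdef⟩ : ∃ β : ℝ, β = ((6 ^ n)⁻¹ / 2 / (C + 1)) ^ (p - 1)⁻¹ := ⟨_, rfl⟩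
  have hβ : 0 < β := by rw [hβdef]; positivity
  have hCβ : C * β ^ (p - 1) ≤ (6 ^ n)⁻¹ / 2 := by
    rw [hβdef, ← Real.rpow_mul (by positivity), inv_mul_cancel₀ hp1.ne', Real.rpow_one,
      mul_div_assoc', div_le_iff₀ (by positivity), mul_comm]
    gcongr
    linarith
  have H : ∀ x r, 0 < r → volume (ball x r) ≤
      2 * volume (ball x r ∩
        {y | ENNReal.ofReal β * avg g x (6 * r) < ENNReal.ofReal (g y)}) := by
    intro x r hr
    have hr6 : 0 < 6 * r := by positivity
    refine le_two_mul_of_le_add_half (volume_ball_ne_top x r)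
      (ne_top_of_le_ne_top (volume_ball_ne_top x r) (measure_mono inter_subset_left)) ?_
    have hsm := volume_small_values_le hp hm hr6 (avg_ne_top hgfin x hr6) (hC' x _ hr6) hβ
    set S := {y | ENNReal.ofReal β * avg g x (6 * r) < ENNReal.ofReal (g y)} with hS
    calc volume (ball x r) ≤ volume (ball x r ∩ S) + volume (ball x r \ S) :=
          measure_le_inter_add_sdiff _ _ _
      _ ≤ volume (ball x r ∩ S) + ENNReal.ofReal (1 / 2) * volume (ball x r) := by
          gcongr
          calc volume (ball x r \ S) ≤ volume (ball x (6 * r) ∩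
                {y | σ y ≤ ENNReal.ofReal β * avg g x (6 * r)}) := by
                refine measure_mono_ae ?_
                filter_upwards [hgσ] with y hy hmem
                refine ⟨ball_subset_ball (by linarith) hmem.1, ?_⟩
                have hnot : ¬ ENNReal.ofReal β * avg g x (6 * r) < ENNReal.ofReal (g y) := hmem.2
                have := not_lt.1 hnot
                rw [hy] at this
                exact this
            _ ≤ ENNReal.ofReal ((6 ^ n)⁻¹ / 2) * volume (ball x (6 * r)) := by
                refine hsm.trans ?_
                gcongr
            _ = ENNReal.ofReal (1 / 2) * volume (ball x r) := by
                rw [volume_ball_mul x (by norm_num), ← mul_assoc,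
                  ← ENNReal.ofReal_mul (by positivity)]
                congr 2
                field_simp
  obtain ⟨ε, hε, hRH⟩ := reverse_holder hg hg0 hgfin hβ H
  obtain ⟨q, hqdef⟩ : ∃ q : ℝ, q = 1 + (p - 1) / (1 + ε) := ⟨_, rfl⟩
  have hq1 : q - 1 = (p - 1) / (1 + ε) := by rw [hqdef]; ring
  have hq0 : 0 < q - 1 := by rw [hq1]; positivity
  refine ⟨q, by linarith, ?_, (2 : ℝ≥0) ^ (q - 1) * C, fun x r hr => ?_⟩
  · have : q - 1 < p - 1 := by
      rw [hq1]; exact div_lt_self hp1 (by linarith)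
    linarith
  have hexp : 1 - q / (q - 1) = (1 - p / (p - 1)) * (1 + ε) := by
    rw [dual_exponent (by linarith), dual_exponent hp, hq1]
    field_simp
  have hpow : ∫⁻ y in ball x r, ENNReal.ofReal (w y) ^ (1 - q / (q - 1)) =
      ∫⁻ y in ball x r, ENNReal.ofReal (g y ^ (1 + ε)) := by
    refine lintegral_congr_ae (ae_restrict_of_ae ?_)
    filter_upwards [hgσ] with y hy
    rw [hexp, ENNReal.rpow_mul, ← ENNReal.ofReal_rpow_of_nonneg (hg0 y) (by linarith), hy]
  rw [hpow]
  calc _ ≤ ((∫⁻ y in ball x r, ENNReal.ofReal (w y)) / volume (ball x r)) *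
        (2 * avg g x r ^ (1 + ε)) ^ (q - 1) := by
        gcongr
        exact hRH x r hr
    _ = 2 ^ (q - 1) * (((∫⁻ y in ball x r, ENNReal.ofReal (w y)) / volume (ball x r)) *
        avg g x r ^ (p - 1)) := by
        have e : (1 + ε) * (q - 1) = p - 1 := by rw [hq1]; field_simp
        rw [ENNReal.mul_rpow_of_nonneg _ _ hq0.le, ← ENNReal.rpow_mul, e]
        ring
    _ ≤ 2 ^ (q - 1) * C := by gcongr; exact hC' x r hr
    _ = _ := by
        rw [ENNReal.coe_mul, ENNReal.coe_rpow_of_nonneg _ hq0.le]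
        rfl

end
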